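/- arXiv:1910.01371 — 2 statements merged into one kernel-verified Lean document; each statement's English description precedes it below -/
import Mathlib

section
/- Let d ≥ 3 be an integer. There exists a constant C > 0 such that for all μ ≥ 2, | (1/4) Σ_{0 ≤ l ≤ μ−(d−2)/2} (m_l^d − m_{l−1}^d) · (μ − l − (d−3)/2) − μ^{d−1}/(2·(d−1)!) | ≤ C μ^{d−2}, where the sum is over integers l. -/
open Real Set

/-- The multiplicity `m_n^d = C(n+d-1, d-1) - C(n+d-3, d-1)`. -/
def multB (d n : ℕ) : ℕ := Nat.choose (n + d - 1) (d - 1) - Nat.choose (n + d - 3) (d - 1)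

/-- The difference `m_l^d - m_{l-1}^d` (with `m_{-1}^d = 0`). -/
def multBdiff (d l : ℕ) : ℤ := (multB d l : ℤ) - if l = 0 then 0 else (multB d (l - 1) : ℤ)

/-!
Summation by parts turns the weighted sum up to `L` into
`m_L^d (A - L - 1) + ∑_{l ≤ L} m_l^d` with `A = μ - (d - 3) / 2`, and `∑_{l ≤ L} m_l^d` telescopes
to `C(L+d-1, d-1) + C(L+d-2, d-1)`. So the sum is a combination of three binomial coefficients with
bounded weights of total mass `2`. For `L = ⌊μ - (d - 2) / 2⌋` each of them is a product of `d - 1`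
factors within `d / 2 + 1` of `μ`, divided by `(d - 1)!`, hence equals
`μ ^ (d - 1) / (d - 1)! + O(μ ^ (d - 2))`. If `μ < (d - 2) / 2` the sum is empty, and `μ ^ (d - 1)`
is itself at most `(d - 2) / 2 * μ ^ (d - 2)`.
-/

section Sums

theorem tsum_ite_natCast_le_eq_sum_range_floor {R M : Type*} [Semiring R] [LinearOrder R]
    [FloorSemiring R] [AddCommMonoid M] [TopologicalSpace M] (f : ℕ → M) {y : R} (hy : 0 ≤ y) :
    (∑' l : ℕ, if (l : R) ≤ y then f l else 0) = ∑ l ∈ Finset.range (⌊y⌋₊ + 1), f l := by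
  simp only [← Nat.le_floor_iff hy, ← Nat.lt_succ_iff, ← Finset.mem_range]
  rw [tsum_eq_sum fun l hl => if_neg hl]
  exact Finset.sum_congr rfl fun l hl => if_pos hl

theorem sum_range_succ_backwardDiff_mul_sub {R : Type*} [CommRing R] (m : ℕ → R) (A : R) (L : ℕ) :
    ∑ l ∈ Finset.range (L + 1), (m l - if l = 0 then 0 else m (l - 1)) * (A - l) =
      m L * (A - L - 1) + ∑ l ∈ Finset.range (L + 1), m l := by
  induction L with
  | zero => simp [mul_sub]
  | succ L ih =>
    rw [Finset.sum_range_succ, ih, Finset.sum_range_succ m (L + 1), if_neg L.succ_ne_zero,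
      Nat.add_sub_cancel]
    push_cast
    ring

end Sums

section Multiplicities

theorem cast_multB_add_two {R : Type*} [AddGroupWithOne R] (k n : ℕ) :
    (multB (k + 2) n : R) = (n + k + 1).choose (k + 1) - (n + k - 1).choose (k + 1) :=
  Nat.cast_sub (Nat.choose_le_choose _ (by lia))

theorem cast_multBdiff {R : Type*} [AddGroupWithOne R] (d l : ℕ) :
    (multBdiff d l : R) = multB d l - if l = 0 then 0 else (multB d (l - 1) : R) := by
  simp [multBdiff]

theorem sum_range_succ_multB_add_two (k L : ℕ) :
    ∑ l ∈ Finset.range (L + 1), multB (k + 2) l =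
      (L + k + 1).choose (k + 1) + (L + k).choose (k + 1) := by
  zify
  induction L with
  | zero => simp [cast_multB_add_two, Nat.choose_eq_zero_of_lt]
  | succ L ih =>
    rw [Finset.sum_range_succ, ih, cast_multB_add_two, Nat.add_right_comm L 1 k,
      Nat.add_sub_cancel]
    ring

theorem sum_range_succ_multBdiff_mul_sub {R : Type*} [CommRing R] (k L : ℕ) (A : R) :
    ∑ l ∈ Finset.range (L + 1), (multBdiff (k + 2) l : R) * (A - l) =
      (A - L) * (L + k + 1).choose (k + 1) + (L + k).choose (k + 1) -
        (A - L - 1) * (L + k - 1).choose (k + 1) := by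
  simp only [cast_multBdiff]
  rw [sum_range_succ_backwardDiff_mul_sub (fun l => (multB (k + 2) l : R)), ← Nat.cast_sum,
    sum_range_succ_multB_add_two, cast_multB_add_two]
  push_cast
  ring

end Multiplicities

section FallingFactorial

variable {R : Type*} [CommRing R] [LinearOrder R] [IsStrictOrderedRing R] {x K : R}

theorem abs_pow_succ_sub_pow_succ_le {y : R} (hx : 0 ≤ x) (hy : 0 ≤ y) (hyx : |y - x| ≤ K)
    (k : ℕ) : |y ^ (k + 1) - x ^ (k + 1)| ≤ K * (k + 1) * (x + K) ^ k := by
  have hK : 0 ≤ K := (abs_nonneg _).trans hyx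
  have hmax : max |y| |x| ≤ x + K := by
    rw [abs_of_nonneg hx, abs_of_nonneg hy]
    exact max_le (by linarith [le_of_abs_le hyx]) (by linarith)
  calc |y ^ (k + 1) - x ^ (k + 1)|
      ≤ |y - x| * (k + 1 : ℕ) * max |y| |x| ^ k := abs_pow_sub_pow_le y x (k + 1)
    _ ≤ K * (k + 1 : ℕ) * (x + K) ^ k := by gcongr
    _ = K * (k + 1) * (x + K) ^ k := by rw [Nat.cast_succ]

-- The `k + 1` factors lie between `N - k` and `N`, hence within `K` of `x`.
theorem abs_descFactorial_succ_sub_pow_le (hx : 0 ≤ x) {N k : ℕ} (hlo : x - K ≤ N - k)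
    (hhi : N ≤ x + K) :
    |(N.descFactorial (k + 1) : R) - x ^ (k + 1)| ≤ K * (k + 1) * (x + K) ^ k := by
  have hsub_ge : (N : R) - k ≤ (N - k : ℕ) := by
    rw [sub_le_iff_le_add]
    exact_mod_cast le_tsub_add
  have hsub_le : ((N - k : ℕ) : R) ≤ N := by exact_mod_cast N.sub_le k
  have hpow_le : ((N - k : ℕ) : R) ^ (k + 1) ≤ N.descFactorial (k + 1) := by
    rw [← Nat.add_sub_add_right N 1 k]
    exact_mod_cast N.pow_sub_le_descFactorial (k + 1)
  have hle_pow : (N.descFactorial (k + 1) : R) ≤ (N : R) ^ (k + 1) := by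
    exact_mod_cast N.descFactorial_le_pow (k + 1)
  have hpow_sub := abs_pow_succ_sub_pow_succ_le (K := K) hx (N - k).cast_nonneg
    (abs_le.2 ⟨by linarith, by linarith⟩) k
  have hpow := abs_pow_succ_sub_pow_succ_le (K := K) hx N.cast_nonneg
    (abs_le.2 ⟨by linarith, by linarith⟩) k
  exact abs_le.2 ⟨by linarith [neg_le_of_abs_le hpow_sub], by linarith [le_of_abs_le hpow]⟩

end FallingFactorial

section Estimates

variable {𝕜 : Type*} [Field 𝕜] [LinearOrder 𝕜] [IsStrictOrderedRing 𝕜] {x : 𝕜}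

theorem abs_choose_succ_sub_pow_div_factorial_le {K : 𝕜} (hx : 0 ≤ x) {N k : ℕ}
    (hlo : x - K ≤ N - k) (hhi : N ≤ x + K) :
    |(N.choose (k + 1) : 𝕜) - x ^ (k + 1) / (k + 1).factorial| ≤
      K / k.factorial * (x + K) ^ k := by
  have hfact : (0 : 𝕜) < (k + 1).factorial := by exact_mod_cast (k + 1).factorial_pos
  have hchoose : (N.choose (k + 1) : 𝕜) = N.descFactorial (k + 1) / (k + 1).factorial := by
    rw [Nat.descFactorial_eq_factorial_mul_choose, Nat.cast_mul, mul_div_cancel_left₀ _ hfact.ne']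
  calc |(N.choose (k + 1) : 𝕜) - x ^ (k + 1) / (k + 1).factorial|
      = |(N.descFactorial (k + 1) : 𝕜) - x ^ (k + 1)| / (k + 1).factorial := by
        rw [hchoose, ← sub_div, abs_div, abs_of_pos hfact]
    _ ≤ K * (k + 1) * (x + K) ^ k / (k + 1).factorial := by
        gcongr
        exact abs_descFactorial_succ_sub_pow_le hx hlo hhi
    _ = K / k.factorial * (x + K) ^ k := by
        rw [Nat.factorial_succ]
        push_cast
        field_simp

theorem abs_quarter_weighted_sum_sub_half_le {t a b c p ε : 𝕜} (ht₀ : 0 ≤ t) (ht₂ : t ≤ 2)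
    (ha : |a - p| ≤ ε) (hb : |b - p| ≤ ε) (hc : |c - p| ≤ ε) :
    |1 / 4 * (t * a + b - (t - 1) * c) - p / 2| ≤ ε := by
  have ht : |t - 1| ≤ 1 := abs_le.2 ⟨by linarith, by linarith⟩
  calc |1 / 4 * (t * a + b - (t - 1) * c) - p / 2|
      = |1 / 4 * (t * (a - p) + (b - p) - (t - 1) * (c - p))| := by ring_nf
    _ = 1 / 4 * |t * (a - p) + (b - p) - (t - 1) * (c - p)| := by
        rw [abs_mul, abs_of_pos (by norm_num : (0 : 𝕜) < 1 / 4)]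
    _ ≤ 1 / 4 * (|t * (a - p)| + |b - p| + |(t - 1) * (c - p)|) := by
        gcongr
        exact (abs_sub _ _).trans (by gcongr; exact abs_add_le _ _)
    _ = 1 / 4 * (t * |a - p| + |b - p| + |t - 1| * |c - p|) := by
        rw [abs_mul, abs_mul, abs_of_nonneg ht₀]
    _ ≤ 1 / 4 * (2 * ε + ε + 1 * ε) := by gcongr
    _ = ε := by ring

theorem add_half_add_two_pow_le {k : ℕ} (hk : (k : 𝕜) / 2 ≤ x) :
    (x + (k / 2 + 2)) ^ k ≤ 6 ^ k * x ^ k := by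
  rcases k.eq_zero_or_pos with rfl | hpos
  · simp
  have hone : (1 : 𝕜) ≤ k := by exact_mod_cast hpos
  rw [← mul_pow]
  exact pow_le_pow_left₀ (by linarith) (by linarith) k

theorem abs_weighted_sum_multBdiff_sub_le {k L : ℕ} (hL : (L : 𝕜) ≤ x - k / 2)
    (hL_succ : x - k / 2 < L + 1) :
    |1 / 4 * ∑ l ∈ Finset.range (L + 1), (multBdiff (k + 2) l : 𝕜) * (x - (k - 1) / 2 - l) -
        x ^ (k + 1) / (k + 1).factorial / 2| ≤
      (k / 2 + 2) / k.factorial * (x + (k / 2 + 2)) ^ k := by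
  have hk : (0 : 𝕜) ≤ k := k.cast_nonneg
  have hx : 0 ≤ x := by linarith [hk, L.cast_nonneg (α := 𝕜)]
  have hchoose (N : ℕ) (hlo : L + k ≤ N + 1) (hhi : N ≤ L + k + 1) :
      |(N.choose (k + 1) : 𝕜) - x ^ (k + 1) / (k + 1).factorial| ≤
        (k / 2 + 2) / k.factorial * (x + (k / 2 + 2)) ^ k := by
    have hlo' : (L + k : 𝕜) ≤ N + 1 := by exact_mod_cast hlo
    have hhi' : (N : 𝕜) ≤ L + k + 1 := by exact_mod_cast hhi
    exact abs_choose_succ_sub_pow_div_factorial_le hx (by linarith) (by linarith)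
  rw [sum_range_succ_multBdiff_mul_sub]
  exact abs_quarter_weighted_sum_sub_half_le (by linarith) (by linarith)
    (hchoose _ (by lia) (by lia)) (hchoose _ (by lia) (by lia)) (hchoose _ (by lia) (by lia))

end Estimates

theorem abs_weighted_tsum_multBdiff_sub_le {k : ℕ} {μ : ℝ} (hμ : 0 ≤ μ) :
    |1 / 4 * (∑' l : ℕ, if (l : ℝ) ≤ μ - k / 2 then
          (multBdiff (k + 2) l : ℝ) * (μ - (k - 1) / 2 - l) else 0) -
        μ ^ (k + 1) / (k + 1).factorial / 2| ≤
      ((k / 2 + 2) / k.factorial * 6 ^ k + k / 2) * μ ^ k := by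
  rcases lt_or_ge μ ((k : ℝ) / 2) with hlt | hge
  · have hempty (l : ℕ) : ¬ (l : ℝ) ≤ μ - k / 2 := by
      linarith [l.cast_nonneg (α := ℝ)]
    have hfact : (1 : ℝ) ≤ (k + 1).factorial := by exact_mod_cast (k + 1).factorial_pos
    simp only [hempty, if_false, tsum_zero, mul_zero, zero_sub, abs_neg]
    calc |μ ^ (k + 1) / (k + 1).factorial / 2|
        = μ ^ (k + 1) / (k + 1).factorial / 2 := abs_of_nonneg (by positivity)
      _ ≤ μ ^ (k + 1) := by
          rw [div_div]
          exact div_le_self (by positivity) (by linarith)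
      _ = μ * μ ^ k := pow_succ' μ k
      _ ≤ ((k / 2 + 2) / k.factorial * 6 ^ k + k / 2) * μ ^ k := by
          gcongr
          exact hlt.le.trans (le_add_of_nonneg_left (by positivity))
  · rw [tsum_ite_natCast_le_eq_sum_range_floor _ (sub_nonneg.2 hge)]
    refine (abs_weighted_sum_multBdiff_sub_le (Nat.floor_le (sub_nonneg.2 hge))
      (Nat.lt_floor_add_one _)).trans ?_
    calc (k / 2 + 2) / k.factorial * (μ + (k / 2 + 2)) ^ k
        ≤ (k / 2 + 2) / k.factorial * (6 ^ k * μ ^ k) := by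
          gcongr
          exact add_half_add_two_pow_le hge
      _ = (k / 2 + 2) / k.factorial * 6 ^ k * μ ^ k := (mul_assoc _ _ _).symm
      _ ≤ ((k / 2 + 2) / k.factorial * 6 ^ k + k / 2) * μ ^ k := by
          gcongr
          exact le_add_of_nonneg_right (by positivity)

theorem weighted_boundary_sum_asymptotics_general (d : ℕ) (hd : 2 ≤ d) :
    ∃ C : ℝ, 0 < C ∧ ∀ μ : ℝ, 0 ≤ μ →
      |(1 / 4) * (∑' l : ℕ, if (l : ℝ) ≤ μ - ((d : ℝ) - 2) / 2 then
            (multBdiff d l : ℝ) * (μ - (l : ℝ) - ((d : ℝ) - 3) / 2)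
          else 0) -
          μ ^ (d - 1) / (2 * (Nat.factorial (d - 1) : ℝ))| ≤ C * μ ^ (d - 2) := by
  obtain ⟨k, rfl⟩ := Nat.exists_eq_add_of_le' hd
  refine ⟨(k / 2 + 2) / k.factorial * 6 ^ k + k / 2, by positivity, fun μ hμ => ?_⟩
  have hcutoff : ((k + 2 : ℕ) - 2 : ℝ) / 2 = k / 2 := by push_cast; ring
  have hweight (l : ℕ) : μ - l - ((k + 2 : ℕ) - 3 : ℝ) / 2 = μ - (k - 1) / 2 - l := by
    push_cast
    ring
  simp only [hcutoff, hweight, Nat.add_sub_cancel, mul_comm (2 : ℝ), ← div_div]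
  exact abs_weighted_tsum_multBdiff_sub_le hμ

/-- the weighted sum of the boundary-correction terms gives the second Weyl term
up to `O(μ^{d-2})`. -/
theorem weighted_boundary_sum_asymptotics (d : ℕ) (hd : 3 ≤ d) :
    ∃ C : ℝ, 0 < C ∧ ∀ μ : ℝ, 2 ≤ μ →
      |(1 / 4) * (∑' l : ℕ, if (l : ℝ) ≤ μ - ((d : ℝ) - 2) / 2 then
            (multBdiff d l : ℝ) * (μ - (l : ℝ) - ((d : ℝ) - 3) / 2)
          else 0) -
          μ ^ (d - 1) / (2 * (Nat.factorial (d - 1) : ℝ))| ≤ C * μ ^ (d - 2) := by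
  obtain ⟨C, hC, hbound⟩ := weighted_boundary_sum_asymptotics_general d (by lia)
  exact ⟨C, hC, fun μ hμ => hbound μ (by linarith)⟩
end

section
/- For every integer d ≥ 3, ∫₀¹ t^{d−2} g(t) dt = (d−2)! / (2^{d+1} · Γ(d/2+1)²); equivalently, (2/(d−2)!) ∫₀¹ t^{d−2} g(t) dt = 2^{−d} Γ(d/2+1)^{−2}. -/
open Real Set

/-- The function `g(t) = (√(1-t²) - t arccos t)/π`. -/
noncomputable def gfun (t : ℝ) : ℝ := (Real.sqrt (1 - t ^ 2) - t * Real.arccos t) / π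

/-! Since `g' = -arccos / π`, `g'' = 1 / (π √(1 - t²))` and `g(1) = g'(1) = 0`, integrating by parts
twice turns the `s`-th moment of `g` into a multiple of `∫₀¹ t ^ (s + 2) / √(1 - t²) dt`. The
substitution `x = t²` makes this a Beta integral with second parameter `1/2`, and Legendre's
duplication formula puts its value into the stated form. -/

lemma integral_rpow_mul_one_sub_rpow {a b : ℝ} (ha : 0 < a) (hb : 0 < b) :
    ∫ x in (0 : ℝ)..1, x ^ (a - 1) * (1 - x) ^ (b - 1) = Gamma a * Gamma b / Gamma (a + b) := by
  have integrand_ofReal : ∀ x ∈ uIcc (0 : ℝ) 1,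
      (x : ℂ) ^ ((a : ℂ) - 1) * (1 - (x : ℂ)) ^ ((b : ℂ) - 1) =
        ((x ^ (a - 1) * (1 - x) ^ (b - 1) : ℝ) : ℂ) := fun x hx ↦ by
    rw [uIcc_of_le zero_le_one] at hx
    push_cast [Complex.ofReal_cpow hx.1, Complex.ofReal_cpow (sub_nonneg.2 hx.2)]
    rfl
  have beta_eq := ProbabilityTheory.beta_eq_betaIntegralReal a b ha hb
  rw [Complex.betaIntegral, intervalIntegral.integral_congr integrand_ofReal,
    intervalIntegral.integral_ofReal, Complex.ofReal_re] at beta_eq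
  exact beta_eq.symm

lemma integral_rpow_mul_one_sub_sq_rpow {a b : ℝ} (ha : 0 < a) (hb : 0 < b) :
    ∫ t in (0 : ℝ)..1, t ^ (2 * a - 1) * (1 - t ^ 2) ^ (b - 1) =
      Gamma a * Gamma b / (2 * Gamma (a + b)) := by
  have substitution := intervalIntegral.integral_comp_mul_deriv_of_deriv_nonneg
    (a := 0) (b := 1) (f := fun t : ℝ ↦ t ^ 2) (f' := fun t ↦ 2 * t)
    (g := fun x ↦ x ^ (a - 1) * (1 - x) ^ (b - 1)) (by fun_prop)
    (fun t _ ↦ by simpa using hasDerivAt_pow 2 t)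
    (fun t ht ↦ mul_nonneg zero_le_two (by simpa using ht.1.le))
  have integrand_eq : ∀ t ∈ Ioo (0 : ℝ) 1,
      t ^ (2 * a - 1) * (1 - t ^ 2) ^ (b - 1) =
        2⁻¹ * (((t ^ 2) ^ (a - 1) * (1 - t ^ 2) ^ (b - 1)) * (2 * t)) := fun t ht ↦ by
    have hpow : t ^ (2 * a - 1) = (t ^ 2) ^ (a - 1) * t := by
      rw [← rpow_natCast_mul ht.1.le, ← rpow_add_one ht.1.ne']
      congr 1
      push_cast
      ring
    rw [hpow]
    ring
  calc
    _ = 2⁻¹ * ∫ t in (0 : ℝ)..1, ((t ^ 2) ^ (a - 1) * (1 - t ^ 2) ^ (b - 1)) * (2 * t) := by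
      rw [← intervalIntegral.integral_const_mul]
      exact intervalIntegral.integral_congr_Ioo_of_le zero_le_one integrand_eq
    _ = 2⁻¹ * ∫ x in (0 : ℝ)..1, x ^ (a - 1) * (1 - x) ^ (b - 1) := by
      simpa using! substitution
    _ = _ := by
      rw [integral_rpow_mul_one_sub_rpow ha hb]
      ring

lemma integral_rpow_div_sqrt_one_sub_sq {s : ℝ} (hs : -1 < s) :
    ∫ t in (0 : ℝ)..1, t ^ s / √(1 - t ^ 2) =
      π * Gamma (s + 1) / (2 ^ (s + 1) * Gamma (s / 2 + 1) ^ 2) := by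
  have duplication : Gamma ((s + 1) / 2) * Gamma (s / 2 + 1) = Gamma (s + 1) * 2 ^ (-s) * √π := by
    convert Gamma_mul_Gamma_add_half ((s + 1) / 2) using 3 <;> ring_nf
  have beta_integral : ∫ t in (0 : ℝ)..1, t ^ s / √(1 - t ^ 2) =
      Gamma ((s + 1) / 2) * √π / (2 * Gamma (s / 2 + 1)) := by
    rw [← Gamma_one_half_eq, show s / 2 + 1 = (s + 1) / 2 + 1 / 2 by ring,
      ← integral_rpow_mul_one_sub_sq_rpow (by linarith) one_half_pos]
    refine intervalIntegral.integral_congr fun t ht ↦ ?_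
    rw [uIcc_of_le zero_le_one] at ht
    have hnonneg : 0 ≤ 1 - t ^ 2 := sub_nonneg.2 (pow_le_one₀ ht.1 ht.2)
    rw [show 2 * ((s + 1) / 2) - 1 = s by ring, show (1 / 2 - 1 : ℝ) = -(1 / 2) by norm_num,
      rpow_neg hnonneg, ← sqrt_eq_rpow, div_eq_mul_inv]
  have Gamma_ne_zero : Gamma (s / 2 + 1) ≠ 0 := (Gamma_pos_of_pos (by linarith)).ne'
  rw [beta_integral, eq_div_of_mul_eq Gamma_ne_zero duplication, rpow_neg zero_le_two,
    rpow_add_one two_ne_zero]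
  field_simp
  rw [sq_sqrt pi_pos.le]

lemma integral_rpow_mul_of_hasDerivAt {f f' : ℝ → ℝ} {b s : ℝ} (hb : 0 ≤ b) (hs : -1 < s)
    (hf : ContinuousOn f (Icc 0 b)) (hff' : ∀ t ∈ Ioo 0 b, HasDerivAt f (f' t) t)
    (hf' : IntervalIntegrable f' MeasureTheory.volume 0 b) :
    ∫ t in (0 : ℝ)..b, t ^ s * f t =
      (b ^ (s + 1) * f b - ∫ t in (0 : ℝ)..b, t ^ (s + 1) * f' t) / (s + 1) := by
  have hs' : 0 < s + 1 := by linarith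
  have parts := intervalIntegral.integral_mul_deriv_eq_deriv_mul_of_hasDerivAt
    (a := 0) (b := b) (u := fun t ↦ t ^ (s + 1)) (u' := fun t ↦ (s + 1) * t ^ s)
    (v := f) (v' := f') (continuous_rpow_const hs'.le).continuousOn (by rwa [uIcc_of_le hb])
    (fun t ht ↦ by
      rw [min_eq_left hb] at ht
      simpa using hasDerivAt_rpow_const (p := s + 1) (Or.inl ht.1.ne'))
    (by rwa [min_eq_left hb, max_eq_right hb])
    ((intervalIntegral.intervalIntegrable_rpow' hs).const_mul _) hf'
  simp only [zero_rpow hs'.ne', zero_mul, sub_zero, mul_assoc,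
    intervalIntegral.integral_const_mul] at parts
  rw [eq_div_iff hs'.ne', parts]
  ring

lemma intervalIntegrable_one_div_sqrt_one_sub_sq :
    IntervalIntegrable (fun t : ℝ ↦ 1 / √(1 - t ^ 2)) MeasureTheory.volume (-1) 1 := by
  refine intervalIntegral.intervalIntegrable_deriv_of_nonneg continuous_arcsin.continuousOn
    (fun t ht ↦ ?_) fun t _ ↦ by positivity
  rw [min_eq_left (by norm_num), max_eq_right (by norm_num)] at ht
  exact hasDerivAt_arcsin ht.1.ne' ht.2.ne

lemma integral_rpow_mul_arccos {s : ℝ} (hs : -1 < s) :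
    ∫ t in (0 : ℝ)..1, t ^ s * arccos t =
      (∫ t in (0 : ℝ)..1, t ^ (s + 1) / √(1 - t ^ 2)) / (s + 1) := by
  rw [integral_rpow_mul_of_hasDerivAt zero_le_one hs continuous_arccos.continuousOn
    (fun t ht ↦ hasDerivAt_arccos (by linarith [ht.1]) ht.2.ne)
    (intervalIntegrable_one_div_sqrt_one_sub_sq.mono_set
      (uIcc_subset_uIcc (by simp) (by simp))).neg]
  simp [div_eq_mul_inv]

lemma continuous_gfun : Continuous gfun := by
  unfold gfun
  fun_prop

lemma gfun_one : gfun 1 = 0 := by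
  simp [gfun]

lemma hasDerivAt_gfun {t : ℝ} (ht : t ∈ Ioo (-1) 1) : HasDerivAt gfun (-(arccos t / π)) t := by
  have hpos : 0 < 1 - t ^ 2 := by nlinarith [ht.1, ht.2]
  have hsqrt : HasDerivAt (fun t : ℝ ↦ √(1 - t ^ 2)) (-(2 * t) / (2 * √(1 - t ^ 2))) t := by
    simpa using ((hasDerivAt_pow 2 t).const_sub 1).sqrt hpos.ne'
  have harccos := (hasDerivAt_id t).mul (hasDerivAt_arccos ht.1.ne' ht.2.ne)
  refine ((hsqrt.sub harccos).div_const π).congr_deriv ?_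
  simp only [id_eq]
  field_simp
  ring

lemma integral_rpow_mul_gfun {s : ℝ} (hs : -1 < s) :
    ∫ t in (0 : ℝ)..1, t ^ s * gfun t =
      (∫ t in (0 : ℝ)..1, t ^ (s + 1) * arccos t) / (π * (s + 1)) := by
  rw [integral_rpow_mul_of_hasDerivAt zero_le_one hs continuous_gfun.continuousOn
    (fun t ht ↦ hasDerivAt_gfun ⟨by linarith [ht.1], ht.2⟩)
    (Continuous.intervalIntegrable (by fun_prop) _ _), gfun_one]
  simp [← mul_div_assoc, div_div]

theorem integral_pow_mul_gfun_general {s : ℝ} (hs : 1 < s) :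
    ∫ t in (0 : ℝ)..1, t ^ (s - 2) * gfun t =
      Gamma (s - 1) / (2 ^ (s + 1) * Gamma (s / 2 + 1) ^ 2) := by
  have hs₀ : s ≠ 0 := by linarith
  have hs₁ : s - 1 ≠ 0 := by linarith
  have Gamma_eq : Gamma (s + 1) = s * ((s - 1) * Gamma (s - 1)) := by
    rw [Gamma_add_one hs₀, ← Gamma_add_one hs₁, sub_add_cancel]
  calc
    _ = (∫ t in (0 : ℝ)..1, t ^ (s - 1) * arccos t) / (π * (s - 1)) := by
      rw [integral_rpow_mul_gfun (by linarith), show s - 2 + 1 = s - 1 by ring]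
    _ = (∫ t in (0 : ℝ)..1, t ^ s / √(1 - t ^ 2)) / s / (π * (s - 1)) := by
      rw [integral_rpow_mul_arccos (by linarith), sub_add_cancel]
    _ = π * Gamma (s + 1) / (2 ^ (s + 1) * Gamma (s / 2 + 1) ^ 2) / s / (π * (s - 1)) := by
      rw [integral_rpow_div_sqrt_one_sub_sq (by linarith)]
    _ = _ := by
      rw [Gamma_eq]
      field_simp

/-- `∫₀¹ t^{d-2} g(t) dt = (d-2)! / (2^{d+1} Γ(d/2+1)²)` for every integer
`d ≥ 3`. -/
theorem integral_pow_mul_gfun (d : ℕ) (hd : 3 ≤ d) :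
    ∫ t in (0:ℝ)..1, t ^ (d - 2) * gfun t =
      (Nat.factorial (d - 2) : ℝ) / (2 ^ (d + 1) * Real.Gamma ((d : ℝ) / 2 + 1) ^ 2) := by
  have sub_two : (d : ℝ) - 2 = (d - 2 : ℕ) := by rw [Nat.cast_sub (by lia), Nat.cast_ofNat]
  have sub_one : (d : ℝ) - 1 = (d - 2 : ℕ) + 1 := by linarith
  have general := integral_pow_mul_gfun_general (s := d) (by norm_cast; lia)
  rw [sub_two, sub_one, Gamma_nat_eq_factorial] at general
  exact_mod_cast general
end
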